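/- arXiv:math/0402353 — 2 statements merged into one kernel-verified Lean document; each statement's English description precedes it below -/
import Mathlib

section
/- Let X be a δ-hyperbolic space with δ > 0, and set a = 1/(15δ). Then the inner pseudometric ρ_x determined by the function ϱ_x^a satisfies (1/2)·ϱ_x(y,z)^a ≤ ρ_x(y,z) ≤ ϱ_x(y,z)^a for all x, y, z ∈ X. -/
/-!
The upper bound is the one-step chain `y, z`. For the lower bound, write `q = ϱ_x ^ a`.

*Geometry.* In a geodesic triangle `x, y, z`, connectedness of the side `[y,z]` gives a point
within `δ` of both other sides, so some `p ∈ [y,z]` has `d(x,p) ≤ (y|z)_x + 2δ`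
(`exists_dist_le_gromovProduct_add`); conversely every `p ∈ [y,z]` has `(y|z)_x ≤ d(x,p)`. Pushing
a near-minimal point of `[y,w]` by at most `δ` onto `[y,z] ∪ [z,w]` therefore yields
`min (y|z)_x (z|w)_x ≤ (y|w)_x + 3δ` (`min_gromovProduct_le`). Since `3δa = 1/5`, this says
`q(y,w) ≤ K max (q(y,z)) (q(z,w))` with `K = exp (1/5)`, and `K² ≤ 2`.

*Chains.* For any such quasi-ultrametric, `q(c₀,cₙ) ≤ 2S`, where `S` is the sum of `q` along the
chain (`le_two_mul_chain_sum`). Split the chain at an edge so that both remaining pieces have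
length at most `S/2`; by induction the endpoints of each piece are at `q`-distance at most `S`, as
are those of the removed edge, whence `q(c₀,cₙ) ≤ K² S ≤ 2S`.
-/

open Metric Set Filter

/-- The Gromov product `(y|z)_x = (d(x,y) + d(x,z) - d(y,z))/2`. -/
noncomputable def gromovProduct {X : Type*} [MetricSpace X] (x y z : X) : ℝ :=
  (dist x y + dist x z - dist y z) / 2

/-- A geodesic segment joining `x` and `y`: the isometric image of the real
interval `[0, d(x,y)]` with endpoints `x` and `y`. -/
def IsGeodesicSegment {X : Type*} [MetricSpace X] (x y : X) (s : Set X) : Prop :=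
  ∃ f : ℝ → X, f 0 = x ∧ f (dist x y) = y ∧ s = f '' Set.Icc (0 : ℝ) (dist x y) ∧
    ∀ u ∈ Set.Icc (0 : ℝ) (dist x y), ∀ v ∈ Set.Icc (0 : ℝ) (dist x y),
      dist (f u) (f v) = |u - v|

/-- A geodesic metric space: any two points are joined by a geodesic segment. -/
def IsGeodesicSpace (X : Type*) [MetricSpace X] : Prop :=
  ∀ x y : X, ∃ s : Set X, IsGeodesicSegment x y s

/-- The Rips condition with constant `δ`: each side of every geodesic triangle is
contained in the `δ`-neighbourhood of the union of the other two sides. -/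
def RipsCondition (X : Type*) [MetricSpace X] (δ : ℝ) : Prop :=
  ∀ x y z : X, ∀ s₁ s₂ s₃ : Set X,
    IsGeodesicSegment x y s₁ → IsGeodesicSegment y z s₂ → IsGeodesicSegment x z s₃ →
    ∀ p ∈ s₃, ∃ q ∈ s₁ ∪ s₂, dist p q ≤ δ

/-- A `δ`-hyperbolic space: a non-compact complete proper geodesic metric space
satisfying the Rips condition with constant `δ`. -/
def IsDeltaHyperbolic (X : Type*) [MetricSpace X] (δ : ℝ) : Prop :=
  NoncompactSpace X ∧ CompleteSpace X ∧ ProperSpace X ∧ IsGeodesicSpace X ∧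
    RipsCondition X δ

/-- The distance cocycle `b_z(x,y) = d(y,z) - d(x,z)` associated with a point `z`. -/
noncomputable def distCocycle {X : Type*} [MetricSpace X] (z x y : X) : ℝ :=
  dist y z - dist x z

/-- The function `ϱ_x(y,z) = exp(-(y|z)_x)` for `y ≠ z`, and `ϱ_x(y,y) = 0`. -/
noncomputable def varrho {X : Type*} [MetricSpace X] (x y z : X) : ℝ :=
  open Classical in
  if y = z then 0 else Real.exp (-(gromovProduct x y z))

/-- The inner (pseudo)metric `ρ_x` determined by the function `ϱ_x ^ a`:
`ρ_x(y,z) = inf { ∑ ϱ_x(x_{i-1},x_i)^a : y = x_0, x_1, …, x_n = z }`. -/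
noncomputable def rhoMetric {X : Type*} [MetricSpace X] (a : ℝ) (x y z : X) : ℝ :=
  sInf {S : ℝ | ∃ (n : ℕ) (c : ℕ → X), 0 < n ∧ c 0 = y ∧ c n = z ∧
    S = ∑ i ∈ Finset.range n, varrho x (c i) (c (i + 1)) ^ a}

section GeodesicSegment

variable {X : Type*} [MetricSpace X] {x y : X} {s : Set X}

lemma IsGeodesicSegment.left_mem (h : IsGeodesicSegment x y s) : x ∈ s := by
  obtain ⟨f, h0, h1, rfl, hf⟩ := h
  exact ⟨0, ⟨le_rfl, dist_nonneg⟩, h0⟩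

lemma IsGeodesicSegment.right_mem (h : IsGeodesicSegment x y s) : y ∈ s := by
  obtain ⟨f, h0, h1, rfl, hf⟩ := h
  exact ⟨dist x y, ⟨dist_nonneg, le_rfl⟩, h1⟩

lemma IsGeodesicSegment.dist_add_dist (h : IsGeodesicSegment x y s) {p : X} (hp : p ∈ s) :
    dist x p + dist p y = dist x y := by
  obtain ⟨f, h0, h1, rfl, hf⟩ := h
  obtain ⟨t, ht, rfl⟩ := hp
  have e0 := hf 0 ⟨le_rfl, dist_nonneg⟩ t ht
  have e1 := hf t ht (dist x y) ⟨dist_nonneg, le_rfl⟩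
  rw [h0, abs_sub_comm, sub_zero, abs_of_nonneg ht.1] at e0
  rw [h1, abs_sub_comm, abs_of_nonneg (sub_nonneg.2 ht.2)] at e1
  rw [e0, e1]; ring

lemma IsGeodesicSegment.isCompact_isPreconnected (h : IsGeodesicSegment x y s) :
    IsCompact s ∧ IsPreconnected s := by
  obtain ⟨f, h0, h1, rfl, hf⟩ := h
  have hc : ContinuousOn f (Icc 0 (dist x y)) := by
    have hl : LipschitzOnWith 1 f (Icc 0 (dist x y)) :=
      LipschitzOnWith.of_dist_le_mul fun u hu v hv => by
        rw [hf u hu v hv, Real.dist_eq]; simp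
    exact hl.continuousOn
  exact ⟨isCompact_Icc.image_of_continuousOn hc, isPreconnected_Icc.image f hc⟩

end GeodesicSegment

section Hyperbolic

variable {X : Type*} [MetricSpace X] {δ : ℝ}

lemma gromovProduct_le_dist {x y z p : X} {s : Set X} (h : IsGeodesicSegment y z s)
    (hp : p ∈ s) : gromovProduct x y z ≤ dist x p := by
  have h1 := h.dist_add_dist hp
  have h2 := dist_triangle x p y
  have h3 := dist_triangle x p z
  rw [dist_comm p y] at h2
  unfold gromovProduct
  linarith

/-- The distance from `x` to a geodesic `[y,z]` exceeds `(y|z)_x` by at most `2δ`. The witness is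
a point of `[y,z]` within `δ` of both other sides of the triangle. -/
lemma exists_dist_le_gromovProduct_add (hδ : 0 < δ) (hG : IsGeodesicSpace X)
    (hR : RipsCondition X δ) {x y z : X} {s : Set X} (h : IsGeodesicSegment y z s) :
    ∃ p ∈ s, dist x p ≤ gromovProduct x y z + 2 * δ := by
  obtain ⟨s₁, h₁⟩ := hG y x
  obtain ⟨s₂, h₂⟩ := hG x z
  have hclosed : ∀ t : Set X, IsClosed {p : X | infDist p t ≤ δ} := fun t =>
    isClosed_le (continuous_infDist_pt t) continuous_const
  have hcover : s ⊆ {p | infDist p s₁ ≤ δ} ∪ {p | infDist p s₂ ≤ δ} := by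
    intro p hp
    obtain ⟨q, hq | hq, hpq⟩ := hR y x z s₁ s₂ s h₁ h₂ h p hp
    · exact Or.inl ((infDist_le_dist_of_mem hq).trans hpq)
    · exact Or.inr ((infDist_le_dist_of_mem hq).trans hpq)
  have hy : infDist y s₁ ≤ δ := by rw [infDist_zero_of_mem h₁.left_mem]; exact hδ.le
  have hz : infDist z s₂ ≤ δ := by rw [infDist_zero_of_mem h₂.right_mem]; exact hδ.le
  obtain ⟨p, hp, hp₁, hp₂⟩ := isPreconnected_closed_iff.1 h.isCompact_isPreconnected.2 _ _
    (hclosed s₁) (hclosed s₂) hcover ⟨y, h.left_mem, hy⟩ ⟨z, h.right_mem, hz⟩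
  obtain ⟨q, hq, eq⟩ := h₁.isCompact_isPreconnected.1.exists_infDist_eq_dist ⟨_, h₁.left_mem⟩ p
  obtain ⟨r, hr, er⟩ := h₂.isCompact_isPreconnected.1.exists_infDist_eq_dist ⟨_, h₂.left_mem⟩ p
  simp only [mem_ofPred_eq] at hp₁ hp₂
  rw [eq] at hp₁
  rw [er] at hp₂
  refine ⟨p, hp, ?_⟩
  have a1 := h₁.dist_add_dist hq
  have a2 := h₂.dist_add_dist hr
  have a3 := h.dist_add_dist hp
  have b1 := dist_triangle y q p
  have b2 := dist_triangle x q p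
  have b3 := dist_triangle x r p
  have b4 := dist_triangle p r z
  rw [dist_comm q p] at b1 b2
  rw [dist_comm r p] at b3
  rw [dist_comm q x, dist_comm y x] at a1
  unfold gromovProduct
  linarith

lemma min_gromovProduct_le (hδ : 0 < δ) (hG : IsGeodesicSpace X)
    (hR : RipsCondition X δ) (x y z w : X) :
    min (gromovProduct x y z) (gromovProduct x z w) ≤ gromovProduct x y w + 3 * δ := by
  obtain ⟨s₁, h₁⟩ := hG y z
  obtain ⟨s₂, h₂⟩ := hG z w
  obtain ⟨s, h⟩ := hG y w
  obtain ⟨p, hp, hxp⟩ := exists_dist_le_gromovProduct_add hδ hG hR (x := x) h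
  obtain ⟨q, hq, hpq⟩ := hR y z w s₁ s₂ s h₁ h₂ h p hp
  have ht := dist_triangle x p q
  have hmin : min (gromovProduct x y z) (gromovProduct x z w) ≤ dist x q := by
    rcases hq with hq | hq
    · exact (min_le_left _ _).trans (gromovProduct_le_dist h₁ hq)
    · exact (min_le_right _ _).trans (gromovProduct_le_dist h₂ hq)
  linarith

lemma varrho_nonneg (x y z : X) : 0 ≤ varrho x y z := by
  unfold varrho
  split_ifs
  exacts [le_rfl, (Real.exp_pos _).le]

lemma varrho_rpow_self {a : ℝ} (ha : 0 < a) (x y : X) : varrho x y y ^ a = 0 := by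
  simp [varrho, Real.zero_rpow ha.ne']

lemma varrho_rpow_of_ne {a : ℝ} {x y z : X} (h : y ≠ z) :
    varrho x y z ^ a = Real.exp (-(a * gromovProduct x y z)) := by
  rw [varrho, if_neg h, ← Real.exp_mul]
  congr 1; ring

/-- The function `ϱ_x ^ a` is a quasi-ultrametric with constant `exp (3δa)`. -/
lemma varrho_rpow_le_mul_max {a : ℝ} (hδ : 0 < δ) (ha : 0 < a) (hG : IsGeodesicSpace X)
    (hR : RipsCondition X δ) (x y z w : X) :
    varrho x y w ^ a ≤ Real.exp (3 * δ * a) * max (varrho x y z ^ a) (varrho x z w ^ a) := by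
  have hnn : ∀ u v : X, 0 ≤ varrho x u v ^ a := fun u v => Real.rpow_nonneg (varrho_nonneg _ _ _) _
  have hK : 1 ≤ Real.exp (3 * δ * a) := Real.one_le_exp (by positivity)
  have hmax : 0 ≤ max (varrho x y z ^ a) (varrho x z w ^ a) := (hnn y z).trans (le_max_left _ _)
  by_cases hyz : y = z
  · subst hyz
    exact (le_max_right _ _).trans (le_mul_of_one_le_left hmax hK)
  by_cases hzw : z = w
  · subst hzw
    exact (le_max_left _ _).trans (le_mul_of_one_le_left hmax hK)
  by_cases hyw : y = w
  · subst hyw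
    rw [varrho_rpow_self ha]
    positivity
  have key := min_gromovProduct_le hδ hG hR x y z w
  have step : ∀ u v : X, u ≠ v → gromovProduct x u v ≤ gromovProduct x y w + 3 * δ →
      varrho x y w ^ a ≤ Real.exp (3 * δ * a) * varrho x u v ^ a := by
    intro u v huv h
    rw [varrho_rpow_of_ne hyw, varrho_rpow_of_ne huv, ← Real.exp_add, Real.exp_le_exp]
    nlinarith [mul_le_mul_of_nonneg_left h ha.le]
  rcases min_le_iff.1 key with h | h
  · exact (step y z hyz h).trans (by gcongr; exact le_max_left _ _)
  · exact (step z w hzw h).trans (by gcongr; exact le_max_right _ _)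

end Hyperbolic

/-- Frink's chain lemma: if `q` is a quasi-ultrametric with constant `K` and `K² ≤ 2`, then the
`q`-distance between the endpoints of a chain is at most twice the sum of `q` along it. -/
lemma le_two_mul_chain_sum {X : Type*} {q : X → X → ℝ} {K : ℝ} (hK : 1 ≤ K) (hK2 : K * K ≤ 2)
    (h0 : ∀ y, q y y = 0) (hnn : ∀ y z, 0 ≤ q y z)
    (hq : ∀ y z w, q y w ≤ K * max (q y z) (q z w)) (n : ℕ) (c : ℕ → X) :
    q (c 0) (c n) ≤ 2 * ∑ i ∈ Finset.range n, q (c i) (c (i + 1)) := by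
  induction n using Nat.strong_induction_on generalizing c with
  | _ n ih =>
  rcases Nat.eq_zero_or_pos n with rfl | hn
  · simp [h0]
  set T : ℕ → ℝ := fun k => ∑ i ∈ Finset.range k, q (c i) (c (i + 1)) with hT
  change q (c 0) (c n) ≤ 2 * T n
  have hTn : 0 ≤ T n := Finset.sum_nonneg fun i _ => hnn _ _
  -- An edge such that the parts of the chain before and after it both have length at most `T n / 2`.
  obtain ⟨p, hpn, hp, hp'⟩ : ∃ p < n, T p ≤ T n / 2 ∧ T n - T (p + 1) ≤ T n / 2 := by
    by_contra! hcon
    have hall : ∀ k ≤ n, T k ≤ T n / 2 := by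
      intro k
      induction k with
      | zero => intro _; simp only [hT, Finset.range_zero, Finset.sum_empty]; positivity
      | succ k ihk =>
        intro hk
        have := hcon k (by omega) (ihk (by omega))
        linarith
    have hz : T n = 0 := by linarith [hall n le_rfl]
    have := hcon (n - 1) (by omega) (hall _ (by omega))
    rw [Nat.sub_add_cancel hn, sub_self] at this
    linarith
  have hsplit : T n = T (p + 1) + ∑ i ∈ Finset.range (n - (p + 1)),
      q (c (p + 1 + i)) (c (p + 1 + i + 1)) := by
    have := Finset.sum_range_add (fun i => q (c i) (c (i + 1))) (p + 1) (n - (p + 1))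
    rwa [Nat.add_sub_cancel' (by omega : p + 1 ≤ n)] at this
  have hsucc : T (p + 1) = T p + q (c p) (c (p + 1)) := Finset.sum_range_succ _ _
  have hTp : 0 ≤ T p := Finset.sum_nonneg fun i _ => hnn _ _
  have hsuf : 0 ≤ ∑ i ∈ Finset.range (n - (p + 1)), q (c (p + 1 + i)) (c (p + 1 + i + 1)) :=
    Finset.sum_nonneg fun i _ => hnn _ _
  have e1 : q (c 0) (c p) ≤ T n := (ih p hpn c).trans (by change 2 * T p ≤ _; linarith)
  have e2 : q (c p) (c (p + 1)) ≤ T n := by linarith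
  have e3 : q (c (p + 1)) (c n) ≤ T n := by
    have := ih (n - (p + 1)) (by omega) (fun i => c (p + 1 + i))
    simp only [Nat.add_zero, Nat.add_sub_cancel' (by omega : p + 1 ≤ n), ← Nat.add_assoc] at this
    linarith
  have e4 : q (c p) (c n) ≤ K * T n := (hq _ (c (p + 1)) _).trans (by gcongr; exact max_le e2 e3)
  calc q (c 0) (c n) ≤ K * max (q (c 0) (c p)) (q (c p) (c n)) := hq _ _ _
    _ ≤ K * (K * T n) := by
      gcongr
      exact max_le (e1.trans (le_mul_of_one_le_left hTn hK)) e4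
    _ = K * K * T n := by ring
    _ ≤ 2 * T n := by gcongr

/-- In a `δ`-hyperbolic space, with `a = 1/(15δ)`, the inner pseudometric `ρ_x`
determined by `ϱ_x ^ a` satisfies `(1/2) ϱ_x(y,z)^a ≤ ρ_x(y,z) ≤ ϱ_x(y,z)^a`. -/
theorem rhoMetric_comparable
    {X : Type*} [MetricSpace X] (δ a : ℝ) (hδ : 0 < δ) (ha : a = 1 / (15 * δ))
    (hX : IsDeltaHyperbolic X δ) (x y z : X) :
    (1 / 2) * varrho x y z ^ a ≤ rhoMetric a x y z ∧
      rhoMetric a x y z ≤ varrho x y z ^ a := by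
  obtain ⟨-, -, -, hG, hR⟩ := hX
  have hapos : 0 < a := by rw [ha]; positivity
  have hnn : ∀ u v : X, 0 ≤ varrho x u v ^ a := fun u v => Real.rpow_nonneg (varrho_nonneg _ _ _) _
  have hK : 1 ≤ Real.exp (3 * δ * a) := Real.one_le_exp (by positivity)
  have hK2 : Real.exp (3 * δ * a) * Real.exp (3 * δ * a) ≤ 2 := by
    have e : 3 * δ * a + 3 * δ * a = 2 / 5 := by rw [ha]; field_simp; norm_num
    rw [← Real.exp_add, e, ← Real.le_log_iff_exp_le (by norm_num)]
    linarith [Real.log_two_gt_d9]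
  have hmem : varrho x y z ^ a ∈ {S : ℝ | ∃ (n : ℕ) (c : ℕ → X), 0 < n ∧ c 0 = y ∧ c n = z ∧
      S = ∑ i ∈ Finset.range n, varrho x (c i) (c (i + 1)) ^ a} :=
    ⟨1, fun i => if i = 0 then y else z, one_pos, by simp, by simp, by simp⟩
  constructor
  · refine le_csInf ⟨_, hmem⟩ ?_
    rintro S ⟨n, c, -, rfl, rfl, rfl⟩
    have := le_two_mul_chain_sum (q := fun u v => varrho x u v ^ a) hK hK2
      (varrho_rpow_self hapos x) hnn (varrho_rpow_le_mul_max hδ hapos hG hR x) n c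
    linarith
  · refine csInf_le ⟨0, ?_⟩ hmem
    rintro S ⟨n, c, -, -, -, rfl⟩
    exact Finset.sum_nonneg fun i _ => hnn _ _
end

section
/- Let X be a δ-hyperbolic space with δ > 0, let (z_n) be a sequence in X converging to a boundary point, and define B(x,y) = limsup_n b_{z_n}(x,y) = limsup_n ( d(y,z_n) − d(x,z_n) ) for x, y ∈ X. Then, with C2 = C2(δ) = (30 log 2)·δ: (i) |B(x,y)| ≤ d(x,y) for all x,y ∈ X, in particular B(x,x) = 0; (ii) 0 ≤ B(x,y) + B(y,x) ≤ C2 for all x,y ∈ X; (iii) 0 ≤ B(x,y) + B(y,z) + B(z,x) ≤ 2·C2 for all x,y,z ∈ X. -/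
/-!
The one geometric input is a four-point inequality: the Rips condition gives
`d(x,q) + d(y,p) ≤ max (d(x,p) + d(y,q)) (d(x,y) + d(p,q)) + 4δ`.
Every point of a geodesic `[x,q]` is `δ`-close to `[x,p]` or to `[p,q]`, and also to `[x,y]` or to
`[y,q]`. Since `[x,q]` is connected, some point `w` of it is `δ`-close to two *opposite* sides
(`[x,p]` and `[y,q]`, or `[x,y]` and `[p,q]`), and then the triangle inequality through `w` gives
the bound.

Applied with `p = z_n`, `q = z_m`, the second alternative costs nothing once `(z_n|z_m)` is large,
so `b_{z_n}(x,y) ≤ b_{z_m}(x,y) + 4δ` for all large `n, m`, and hence `B(x,y) ≤ b_{z_m}(x,y) + 4δ`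
for all large `m`. Summing this over two or three pairs at a common `m`, where the cocycles add up
to `0`, gives the upper bounds `8δ` and `12δ`, below `C₂` and `2 C₂` because
`30 log 2 > 20`. The lower bounds come from subadditivity of the limsup.
-/

open Metric Set Filter

theorem IsGeodesicSegment.isCompact {X : Type*} [MetricSpace X] {a b : X} {s : Set X}
    (h : IsGeodesicSegment a b s) : IsCompact s := by
  obtain ⟨f, -, -, rfl, hf⟩ := h
  refine isCompact_Icc.image_of_continuousOn ?_
  refine (LipschitzOnWith.of_dist_le_mul (K := 1) fun u hu v hv => ?_).continuousOn
  simp [hf u hu v hv, Real.dist_eq]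

theorem IsGeodesicSegment.left_mem_s12 {X : Type*} [MetricSpace X] {a b : X} {s : Set X}
    (h : IsGeodesicSegment a b s) : a ∈ s := by
  obtain ⟨f, h0, -, rfl, -⟩ := h
  exact ⟨0, ⟨le_rfl, dist_nonneg⟩, h0⟩

theorem IsGeodesicSegment.right_mem_s12 {X : Type*} [MetricSpace X] {a b : X} {s : Set X}
    (h : IsGeodesicSegment a b s) : b ∈ s := by
  obtain ⟨f, -, h1, rfl, -⟩ := h
  exact ⟨_, ⟨dist_nonneg, le_rfl⟩, h1⟩

theorem IsGeodesicSegment.isPreconnected {X : Type*} [MetricSpace X] {a b : X} {s : Set X}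
    (h : IsGeodesicSegment a b s) : IsPreconnected s := by
  obtain ⟨f, -, -, rfl, hf⟩ := h
  refine isPreconnected_Icc.image f ?_
  refine (LipschitzOnWith.of_dist_le_mul (K := 1) fun u hu v hv => ?_).continuousOn
  simp [hf u hu v hv, Real.dist_eq]

theorem IsGeodesicSegment.dist_add_dist_s12 {X : Type*} [MetricSpace X] {a b u : X} {s : Set X}
    (h : IsGeodesicSegment a b s) (hu : u ∈ s) : dist a u + dist u b = dist a b := by
  obtain ⟨f, h0, h1, rfl, hf⟩ := h
  obtain ⟨t, ht, rfl⟩ := hu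
  have e0 := hf 0 ⟨le_rfl, dist_nonneg⟩ t ht
  have e1 := hf t ht _ ⟨dist_nonneg, le_rfl⟩
  rw [h0, zero_sub, abs_neg, abs_of_nonneg ht.1] at e0
  rw [h1, abs_of_nonpos (by linarith [ht.2])] at e1
  linarith

theorem IsGeodesicSegment.dist_add_dist_le {X : Type*} [MetricSpace X] {a b w : X} {s : Set X}
    {δ : ℝ} (hδ : 0 ≤ δ) (h : IsGeodesicSegment a b s) (hw : w ∈ cthickening δ s) :
    dist a w + dist w b ≤ dist a b + 2 * δ := by
  rw [h.isCompact.cthickening_eq_biUnion_closedBall hδ] at hw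
  obtain ⟨u, hu, hwu⟩ := mem_iUnion₂.1 hw
  have h1 := h.dist_add_dist_s12 hu
  have h2 := dist_triangle a u w
  have h3 := dist_triangle w u b
  rw [mem_closedBall] at hwu
  rw [dist_comm u w] at h2
  linarith

theorem RipsCondition.subset_cthickening {X : Type*} [MetricSpace X] {δ : ℝ}
    (hR : RipsCondition X δ) {x y z : X} {s₁ s₂ s₃ : Set X} (h₁ : IsGeodesicSegment x y s₁)
    (h₂ : IsGeodesicSegment y z s₂) (h₃ : IsGeodesicSegment x z s₃) :
    s₃ ⊆ cthickening δ s₁ ∪ cthickening δ s₂ := by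
  intro p hp
  obtain ⟨q, hq | hq, hpq⟩ := hR x y z s₁ s₂ s₃ h₁ h₂ h₃ p hp
  · exact Or.inl (mem_cthickening_of_dist_le p q δ s₁ hq hpq)
  · exact Or.inr (mem_cthickening_of_dist_le p q δ s₂ hq hpq)

/-- The four-point inequality, with the maximum of the two sums written as a disjunction. -/
theorem RipsCondition.four_point {X : Type*} [MetricSpace X] {δ : ℝ} (hδ : 0 ≤ δ)
    (hG : IsGeodesicSpace X) (hR : RipsCondition X δ) (x y p q : X) :
    dist x q + dist y p ≤ dist x p + dist y q + 4 * δ ∨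
      dist x q + dist y p ≤ dist x y + dist p q + 4 * δ := by
  obtain ⟨s, hs⟩ := hG x q
  obtain ⟨a, ha⟩ := hG x p
  obtain ⟨b, hb⟩ := hG p q
  obtain ⟨c, hc⟩ := hG x y
  obtain ⟨d, hd⟩ := hG y q
  have hab := hR.subset_cthickening ha hb hs
  have hcd := hR.subset_cthickening hc hd hs
  have key : ∃ w ∈ s, (w ∈ cthickening δ a ∧ w ∈ cthickening δ d) ∨
      (w ∈ cthickening δ b ∧ w ∈ cthickening δ c) := by
    -- A point near both `a` and `b` is near `c` or `d`, hence near two opposite sides.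
    obtain ⟨w, hw, hwa, hwb⟩ := isPreconnected_closed_iff.1 hs.isPreconnected _ _
      isClosed_cthickening isClosed_cthickening hab
      ⟨x, hs.left_mem_s12, self_subset_cthickening a ha.left_mem_s12⟩
      ⟨q, hs.right_mem_s12, self_subset_cthickening b hb.right_mem_s12⟩
    rcases hcd hw with h | h
    · exact ⟨w, hw, Or.inr ⟨hwb, h⟩⟩
    · exact ⟨w, hw, Or.inl ⟨hwa, h⟩⟩
  obtain ⟨w, -, ⟨h1, h2⟩ | ⟨h1, h2⟩⟩ := key
  · left
    linarith [ha.dist_add_dist_le hδ h1, hd.dist_add_dist_le hδ h2, dist_triangle x w q,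
      dist_triangle y w p]
  · right
    linarith [hb.dist_add_dist_le hδ h1, hc.dist_add_dist_le hδ h2, dist_triangle x w q,
      dist_triangle y w p, dist_comm w p, dist_comm y w]

theorem abs_distCocycle_le {X : Type*} [MetricSpace X] (z x y : X) :
    |distCocycle z x y| ≤ dist x y := by
  rw [distCocycle, dist_comm x y]
  exact abs_dist_sub_le y x z

/-- Along a sequence converging to a boundary point, the cocycles `b_{z_n}(x,y)` eventually
oscillate by at most `4δ`. -/
theorem exists_distCocycle_le_add {X : Type*} [MetricSpace X] {δ : ℝ} (hδ : 0 ≤ δ)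
    (hG : IsGeodesicSpace X) (hR : RipsCondition X δ) {z : ℕ → X} {x₀ : X}
    (hz : ∀ M : ℝ, ∃ N : ℕ, ∀ n m : ℕ, N ≤ n → N ≤ m → M ≤ gromovProduct x₀ (z n) (z m))
    (x y : X) :
    ∃ N, ∀ n m, N ≤ n → N ≤ m → distCocycle (z n) x y ≤ distCocycle (z m) x y + 4 * δ := by
  -- With this bound on `(z_n|z_m)`, `d(x,y) + d(z_n,z_m)` is at most `d(x,z_n) + d(y,z_m)`.
  obtain ⟨N, hN⟩ := hz (dist x₀ x + dist x y)
  refine ⟨N, fun n m hn hm => ?_⟩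
  have h := hN n m hn hm
  simp only [gromovProduct, distCocycle] at h ⊢
  rcases hR.four_point hδ hG x y (z n) (z m) with h' | h'
  · linarith
  · linarith [dist_triangle x₀ x (z n), dist_triangle x₀ x (z m), dist_triangle x y (z m)]

/-- Properties of `B(x,y) = limsup_n b_{z_n}(x,y)` for a sequence `(z_n)` converging
to a boundary point of a `δ`-hyperbolic space: with `C₂ = (30 log 2) δ`,
(i) `|B(x,y)| ≤ d(x,y)` (in particular `B(x,x) = 0`);
(ii) `0 ≤ B(x,y) + B(y,x) ≤ C₂`;
(iii) `0 ≤ B(x,y) + B(y,z) + B(z,x) ≤ 2 C₂`. -/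
theorem busemann_quasicocycle
    {X : Type*} [MetricSpace X] (δ C₂ : ℝ) (hδ : 0 < δ)
    (hC₂ : C₂ = 30 * Real.log 2 * δ) (hX : IsDeltaHyperbolic X δ)
    (zseq : ℕ → X) (x₀ : X)
    (hconv : ∀ M : ℝ, ∃ N : ℕ, ∀ n m : ℕ, N ≤ n → N ≤ m →
      M ≤ gromovProduct x₀ (zseq n) (zseq m))
    (B : X → X → ℝ)
    (hB : ∀ x y : X,
      B x y = Filter.limsup (fun n => distCocycle (zseq n) x y) Filter.atTop) :
    (∀ x y : X, |B x y| ≤ dist x y) ∧ (∀ x : X, B x x = 0) ∧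
      (∀ x y : X, 0 ≤ B x y + B y x ∧ B x y + B y x ≤ C₂) ∧
      (∀ x y z : X, 0 ≤ B x y + B y z + B z x ∧ B x y + B y z + B z x ≤ 2 * C₂) := by
  obtain ⟨-, -, -, hG, hR⟩ := hX
  have hup : ∀ x y, IsBoundedUnder (· ≤ ·) atTop (fun n => distCocycle (zseq n) x y) :=
    fun x y => isBoundedUnder_of ⟨_, fun n => (abs_le.1 (abs_distCocycle_le (zseq n) x y)).2⟩
  have hlo : ∀ x y, IsBoundedUnder (· ≥ ·) atTop (fun n => distCocycle (zseq n) x y) :=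
    fun x y => isBoundedUnder_of ⟨_, fun n => (abs_le.1 (abs_distCocycle_le (zseq n) x y)).1⟩
  have h1 : ∀ x y, |B x y| ≤ dist x y := by
    intro x y
    rw [hB, abs_le]
    exact ⟨le_limsup_of_frequently_le
        (Frequently.of_forall fun n => (abs_le.1 (abs_distCocycle_le (zseq n) x y)).1) (hup x y),
      limsup_le_of_le (hlo x y).isCoboundedUnder_le
        (Eventually.of_forall fun n => (abs_le.1 (abs_distCocycle_le (zseq n) x y)).2)⟩
  have h0 : ∀ x, B x x = 0 := fun x => by simpa using h1 x x
  have hosc : ∀ x y, ∀ᶠ m in atTop, B x y ≤ distCocycle (zseq m) x y + 4 * δ := by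
    intro x y
    obtain ⟨N, hN⟩ := exists_distCocycle_le_add hδ.le hG hR hconv x y
    filter_upwards [eventually_ge_atTop N] with m hm
    rw [hB]
    refine limsup_le_of_le (hlo x y).isCoboundedUnder_le ?_
    filter_upwards [eventually_ge_atTop N] with n hn using hN n m hn hm
  have hlt : ∀ x y, ∀ ε > 0, ∀ᶠ m in atTop, distCocycle (zseq m) x y < B x y + ε := by
    intro x y ε hε
    refine eventually_lt_of_limsup_lt ?_ (hup x y)
    rw [← hB]
    linarith
  have h3 : ∀ x y z, 0 ≤ B x y + B y z + B z x := by
    intro x y z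
    refine le_of_forall_pos_le_add fun ε hε => ?_
    have hε' : 0 < ε / 3 := by positivity
    obtain ⟨m, hxy, hyz, hzx⟩ :=
      ((hlt x y _ hε').and ((hlt y z _ hε').and (hlt z x _ hε'))).exists
    simp only [distCocycle] at hxy hyz hzx
    linarith
  have hC : 20 * δ ≤ C₂ := by
    rw [hC₂]
    have := Real.log_two_gt_d9
    gcongr
    linarith
  refine ⟨h1, h0, fun x y => ⟨?_, ?_⟩, fun x y z => ⟨h3 x y z, ?_⟩⟩
  · linarith [h3 x y x, h0 x]
  · obtain ⟨m, hxy, hyx⟩ := ((hosc x y).and (hosc y x)).exists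
    simp only [distCocycle] at hxy hyx
    linarith
  · obtain ⟨m, hxy, hyz, hzx⟩ := ((hosc x y).and ((hosc y z).and (hosc z x))).exists
    simp only [distCocycle] at hxy hyz hzx
    linarith
end
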